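/- arXiv:2303.06778 — 8 statements merged into one kernel-verified Lean document; each statement's English description precedes it below -/
import Mathlib

section
/- Let n ≥ 1, let Λ ⊂ ℝⁿ be a Lebesgue measurable set with finite Lebesgue measure, let V ∈ L¹(Λ, ℝ), and let (J_d)_{d∈ℕ} ⊂ L¹(Λ, ℝ) be a family of functions such that (i) for every d and every x ∈ Λ, V(x) ≤ J_d(x), and (ii) ∫_Λ |V(x) − J_d(x)| dx → 0 as d → ∞. Then for every γ ∈ ℝ, D_V({x ∈ Λ : J_d(x) < γ}, {x ∈ Λ : V(x) < γ}) → 0 as d → ∞. -/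
open Filter MeasureTheory

/-- If `V ≤ J d` on a finite-measure measurable set `Λ`, all functions are
in `L¹(Λ)`, and `∫_Λ |V - J d| → 0`, then the strict `γ`-sublevel sets of `J d` on `Λ`
converge to the strict `γ`-sublevel set of `V` on `Λ` in the volume metric
(the Lebesgue measure of the symmetric difference). -/
theorem statement_1 (n : ℕ) (hn : 1 ≤ n)
    (Λ : Set (EuclideanSpace ℝ (Fin n))) (hΛ : MeasurableSet Λ)
    (hfin : volume Λ < ⊤)
    (V : EuclideanSpace ℝ (Fin n) → ℝ) (hV : IntegrableOn V Λ)
    (J : ℕ → EuclideanSpace ℝ (Fin n) → ℝ) (hJ : ∀ d : ℕ, IntegrableOn (J d) Λ)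
    (h1 : ∀ d : ℕ, ∀ x ∈ Λ, V x ≤ J d x)
    (h2 : Tendsto (fun d : ℕ => ∫ x in Λ, |V x - J d x|) atTop (nhds 0))
    (γ : ℝ) :
    Tendsto (fun d : ℕ =>
        volume (({x ∈ Λ | J d x < γ} \ {x ∈ Λ | V x < γ}) ∪
                ({x ∈ Λ | V x < γ} \ {x ∈ Λ | J d x < γ})))
      atTop (nhds 0) := by
  set μ := (volume : Measure (EuclideanSpace ℝ (Fin n))).restrict Λ with hμ
  haveI : IsFiniteMeasure μ := ⟨by simpa [hμ] using hfin⟩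
  have hVi : Integrable V μ := hV
  have hJi : ∀ d, Integrable (J d) μ := hJ
  have hm : TendstoInMeasure μ J atTop V := by
    apply tendstoInMeasure_of_tendsto_eLpNorm (p := 1) one_ne_zero
      (fun d => (hJi d).aestronglyMeasurable) hVi.aestronglyMeasurable
    have h3 := ENNReal.tendsto_ofReal h2
    rw [ENNReal.ofReal_zero] at h3
    refine h3.congr fun d => ?_
    rw [eLpNorm_one_eq_lintegral_enorm,
      ← ofReal_integral_norm_eq_lintegral_enorm ((hJi d).sub hVi)]
    congr 1
    apply integral_congr_ae
    filter_upwards with x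
    simp [Real.norm_eq_abs, abs_sub_comm]
  -- thin layers below the level
  have hlayer : Tendsto (fun k : ℕ => μ {x | γ - 1 / ((k : ℝ) + 1) ≤ V x ∧ V x < γ})
      atTop (nhds 0) := by
    have hI : (⋂ k : ℕ, {x | γ - 1 / ((k : ℝ) + 1) ≤ V x ∧ V x < γ}) = ∅ := by
      ext x
      simp only [Set.mem_iInter, Set.mem_setOf_eq, Set.mem_empty_iff_false, iff_false]
      intro h
      obtain ⟨k, hk⟩ := exists_nat_one_div_lt (sub_pos.2 (h 0).2)
      linarith [(h k).1]
    have := tendsto_measure_iInter_atTop (μ := μ)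
      (s := fun k : ℕ => {x | γ - 1 / ((k : ℝ) + 1) ≤ V x ∧ V x < γ})
      (fun k => (nullMeasurableSet_le aemeasurable_const hVi.aemeasurable).inter
        (nullMeasurableSet_lt hVi.aemeasurable aemeasurable_const))
      (fun a b hab x hx => ⟨by
        have := Nat.one_div_le_one_div (α := ℝ) hab
        linarith [hx.1], hx.2⟩)
      ⟨0, measure_ne_top _ _⟩
    rwa [hI, measure_empty] at this
  rw [ENNReal.tendsto_nhds_zero] at hlayer ⊢
  intro ε hε
  have hε2 : 0 < ε / 2 := ENNReal.half_pos hε.ne'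
  obtain ⟨k, hk⟩ := (hlayer (ε / 2) hε2).exists
  have hδ : (0 : ℝ) < 1 / ((k : ℝ) + 1) := by positivity
  have hm' := hm (ENNReal.ofReal (1 / ((k : ℝ) + 1))) (ENNReal.ofReal_pos.2 hδ)
  rw [ENNReal.tendsto_nhds_zero] at hm'
  filter_upwards [hm' (ε / 2) hε2] with d hd
  have hsub : (({x ∈ Λ | J d x < γ} \ {x ∈ Λ | V x < γ}) ∪
      ({x ∈ Λ | V x < γ} \ {x ∈ Λ | J d x < γ})) ⊆ Λ := by
    rintro x (hx | hx) <;> exact hx.1.1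
  rw [← Measure.restrict_eq_self volume hsub, ← hμ, ← ENNReal.add_halves ε]
  refine le_trans (measure_mono ?_) ((measure_union_le _ _).trans (add_le_add hk hd))
  rintro x (⟨⟨hx, h⟩, h'⟩ | ⟨⟨hx, h⟩, h'⟩)
  · exact absurd ⟨hx, (h1 d x hx).trans_lt h⟩ h'
  · have hJx : γ ≤ J d x := not_lt.1 fun h0 => h' ⟨hx, h0⟩
    by_cases hc : γ - 1 / ((k : ℝ) + 1) ≤ V x
    · exact Or.inl ⟨hc, h⟩
    · right
      simp only [Set.mem_setOf_eq, edist_dist, Real.dist_eq]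
      apply ENNReal.ofReal_le_ofReal
      refine le_trans ?_ (le_abs_self _)
      linarith [not_le.1 hc]
end

section
/- Let n ≥ 1, let Λ ⊂ ℝⁿ be a Lebesgue measurable set with finite Lebesgue measure, let V ∈ L¹(Λ, ℝ), and let (J_d)_{d∈ℕ} ⊂ L¹(Λ, ℝ) be a family of functions such that (i) for every d and every x ∈ Λ, J_d(x) ≤ V(x), and (ii) ∫_Λ |V(x) − J_d(x)| dx → 0 as d → ∞. Then for every γ ∈ ℝ, D_V({x ∈ Λ : V(x) ≤ γ}, {x ∈ Λ : J_d(x) ≤ γ}) → 0 as d → ∞. -/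
open Filter MeasureTheory

/-- If `J d ≤ V` on a finite-measure measurable set `Λ`, all functions are
in `L¹(Λ)`, and `∫_Λ |V - J d| → 0`, then the non-strict `γ`-sublevel sets of `J d` on `Λ`
converge to the non-strict `γ`-sublevel set of `V` on `Λ` in the volume metric. -/
theorem statement_2 (n : ℕ) (hn : 1 ≤ n)
    (Λ : Set (EuclideanSpace ℝ (Fin n))) (hΛ : MeasurableSet Λ)
    (hfin : volume Λ < ⊤)
    (V : EuclideanSpace ℝ (Fin n) → ℝ) (hV : IntegrableOn V Λ)
    (J : ℕ → EuclideanSpace ℝ (Fin n) → ℝ) (hJ : ∀ d : ℕ, IntegrableOn (J d) Λ)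
    (h1 : ∀ d : ℕ, ∀ x ∈ Λ, J d x ≤ V x)
    (h2 : Tendsto (fun d : ℕ => ∫ x in Λ, |V x - J d x|) atTop (nhds 0))
    (γ : ℝ) :
    Tendsto (fun d : ℕ =>
        volume (({x ∈ Λ | V x ≤ γ} \ {x ∈ Λ | J d x ≤ γ}) ∪
                ({x ∈ Λ | J d x ≤ γ} \ {x ∈ Λ | V x ≤ γ})))
      atTop (nhds 0) := by
  set μ := (volume : Measure (EuclideanSpace ℝ (Fin n))).restrict Λ with hμ
  haveI : IsFiniteMeasure μ := ⟨by simpa [hμ] using hfin⟩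
  have hVm : AEMeasurable V μ := hV.aestronglyMeasurable.aemeasurable
  have hA : Tendsto (fun k : ℕ => μ (V ⁻¹' Set.Ioo γ (γ + 1 / ((k : ℝ) + 1)))) atTop (nhds 0) := by
    have h := tendsto_measure_iInter_atTop (μ := μ)
      (s := fun k : ℕ => V ⁻¹' Set.Ioo γ (γ + 1 / ((k : ℝ) + 1)))
      (fun k => hVm.nullMeasurableSet_preimage measurableSet_Ioo)
      (by
        intro a b hab x hx
        refine ⟨hx.1, hx.2.trans_le ?_⟩
        have := Nat.one_div_le_one_div (α := ℝ) hab
        linarith)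
      ⟨0, measure_ne_top _ _⟩
    have he : (⋂ k : ℕ, V ⁻¹' Set.Ioo γ (γ + 1 / ((k : ℝ) + 1))) = ∅ := by
      ext x
      simp only [Set.mem_iInter, Set.mem_preimage, Set.mem_Ioo, Set.mem_empty_iff_false, iff_false]
      intro hx
      obtain ⟨k, hk⟩ := exists_nat_one_div_lt (sub_pos.2 (hx 0).1)
      have := (hx k).2
      linarith
    rw [he, measure_empty] at h
    exact h
  have hB : ∀ ε : ℝ, 0 < ε →
      Tendsto (fun d : ℕ => μ {x | ε ≤ |V x - J d x|}) atTop (nhds 0) := by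
    intro ε hε
    have hr : Tendsto (fun d : ℕ => μ.real {x | ε ≤ |V x - J d x|}) atTop (nhds 0) := by
      have h3 := h2.div_const ε
      rw [zero_div] at h3
      refine squeeze_zero (fun d => measureReal_nonneg) (fun d => ?_) h3
      rw [le_div_iff₀ hε, mul_comm]
      exact mul_meas_ge_le_integral_of_nonneg (Eventually.of_forall fun x => abs_nonneg _)
        (hV.sub (hJ d)).abs ε
    have h4 := ENNReal.tendsto_ofReal hr
    simpa [ofReal_measureReal] using h4
  rw [ENNReal.tendsto_nhds_zero]
  intro ε hε
  have hε2 : 0 < ε / 2 := ENNReal.half_pos hε.ne'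
  obtain ⟨k, hk⟩ := ((ENNReal.tendsto_nhds_zero.1 hA) _ hε2).exists
  have hk0 : (0 : ℝ) < 1 / ((k : ℝ) + 1) := Nat.one_div_pos_of_nat
  filter_upwards [(ENNReal.tendsto_nhds_zero.1 (hB _ hk0)) _ hε2] with d hd
  rw [← Measure.restrict_eq_self volume (t := Λ) (by
    rintro x (hx | hx)
    · exact hx.1.1
    · exact hx.1.1)]
  calc μ _ ≤ μ (V ⁻¹' Set.Ioo γ (γ + 1 / ((k : ℝ) + 1)) ∪
          {x | 1 / ((k : ℝ) + 1) ≤ |V x - J d x|}) := by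
        apply measure_mono
        rintro x (⟨⟨hx, hv⟩, hj⟩ | ⟨⟨hx, hj⟩, hv⟩)
        · exact absurd ⟨hx, (h1 d x hx).trans hv⟩ hj
        · have hv' : γ < V x := by
            by_contra hc
            exact hv ⟨hx, not_lt.1 hc⟩
          by_cases hc : V x < γ + 1 / ((k : ℝ) + 1)
          · exact Or.inl ⟨hv', hc⟩
          · right
            have := le_abs_self (V x - J d x)
            simp only [Set.mem_setOf_eq]
            linarith
    _ ≤ _ := measure_union_le _ _
    _ ≤ ε / 2 + ε / 2 := add_le_add hk hd
    _ = ε := ENNReal.add_halves ε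
end

section
/- Let n, m ≥ 1, let Λ ⊂ ℝⁿ be a compact set, let r > 0, let g₁, …, g_m : ℝⁿ → ℝ be polynomial functions, and set V(x) := min_{1 ≤ i ≤ m} g_i(x). Then for every ε > 0 there exist polynomial functions H₁, H₂ : ℝⁿ → ℝ such that: sup_{x∈Λ} |V(x) − H_j(x)| < ε for j ∈ {1,2}; H₁(x) < g_i(x) for every x with ‖x‖₂ < r and every 1 ≤ i ≤ m; and H₂(x) > g_i(x) for every 1 ≤ i ≤ m and every x with ‖x‖₂ < r satisfying x ∈ Y_i, where Y_i := {y ∈ Λ : g_i(y) ≤ g_j(y) for all 1 ≤ j ≤ m}. -/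
/-- A function `ℝⁿ → ℝ` is a polynomial function if it is the evaluation map of some
multivariate polynomial `P ∈ ℝ[x₁,…,xₙ]`. -/
def IsPolynomialFun {n : ℕ} (p : EuclideanSpace ℝ (Fin n) → ℝ) : Prop :=
  ∃ P : MvPolynomial (Fin n) ℝ, ∀ x, p x = MvPolynomial.eval (fun i => x i) P

/-- The pointwise minimum `V` of finitely many polynomial functions can be
approximated uniformly on a compact set `Λ` by polynomial functions `H₁, H₂`, with
`H₁ < g i` on the open ball `B_r(0)` for every `i`, and `H₂ > g i` on
`B_r(0) ∩ Y_i`, where `Y_i = {y ∈ Λ | ∀ j, g i y ≤ g j y}`. -/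
theorem statement_7 (n m : ℕ) (hn : 1 ≤ n) (hm : 1 ≤ m)
    (Λ : Set (EuclideanSpace ℝ (Fin n))) (hΛ : IsCompact Λ)
    (r : ℝ) (hr : 0 < r)
    (g : Fin m → EuclideanSpace ℝ (Fin n) → ℝ)
    (hg : ∀ i, IsPolynomialFun (g i))
    (V : EuclideanSpace ℝ (Fin n) → ℝ)
    (hV : ∀ x, V x = Finset.univ.inf'
      (Finset.univ_nonempty_iff.mpr ⟨⟨0, hm⟩⟩) (fun i => g i x))
    (ε : ℝ) (hε : 0 < ε) :
    ∃ H₁ H₂ : EuclideanSpace ℝ (Fin n) → ℝ,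
      IsPolynomialFun H₁ ∧ IsPolynomialFun H₂ ∧
      (⨆ x ∈ Λ, |V x - H₁ x|) < ε ∧ (⨆ x ∈ Λ, |V x - H₂ x|) < ε ∧
      (∀ x, ‖x‖ < r → ∀ i : Fin m, H₁ x < g i x) ∧
      (∀ i : Fin m, ∀ x, ‖x‖ < r →
        x ∈ {y ∈ Λ | ∀ j : Fin m, g i y ≤ g j y} → g i x < H₂ x) := by
  have hcoord : ∀ i : Fin n, Continuous (fun x : EuclideanSpace ℝ (Fin n) => x i) := by
    intro i; fun_prop
  let c : Fin n → C(EuclideanSpace ℝ (Fin n), ℝ) := fun i => ⟨fun x => x i, hcoord i⟩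
  have heval : ∀ (P : MvPolynomial (Fin n) ℝ) (x : EuclideanSpace ℝ (Fin n)),
      (MvPolynomial.aeval c P) x = MvPolynomial.eval (fun i => x i) P := by
    intro P x
    induction P using MvPolynomial.induction_on with
    | C a => simp
    | add p q hp hq => simp [hp, hq]
    | mul_X p i hp => simp [hp, c]
  have hgc : ∀ i, Continuous (g i) := by
    intro i
    obtain ⟨P, hP⟩ := hg i
    have : g i = (MvPolynomial.aeval c P : C(EuclideanSpace ℝ (Fin n), ℝ)) := by
      funext x; rw [hP, heval]
    rw [this]; exact ContinuousMap.continuous _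
  have hVc : Continuous V := by
    have : V = fun x => Finset.univ.inf'
      (Finset.univ_nonempty_iff.mpr ⟨⟨0, hm⟩⟩) (fun i => g i x) := funext hV
    rw [this]
    exact Continuous.finset_inf'_apply _ (fun i _ => hgc i)
  have hsep : (MvPolynomial.aeval (R := ℝ) c).range.SeparatesPoints := by
    intro x y hxy
    obtain ⟨i, hi⟩ : ∃ i, x i ≠ y i := by
      by_contra! h
      exact hxy (by ext i; exact h i)
    exact ⟨_, ⟨c i, ⟨MvPolynomial.X i, by simp⟩, rfl⟩, hi⟩
  have hK : IsCompact (Λ ∪ Metric.closedBall (0 : EuclideanSpace ℝ (Fin n)) r) :=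
    hΛ.union (isCompact_closedBall _ _)
  obtain ⟨q, ⟨Q, hQ⟩, hq⟩ :=
    ContinuousMap.exists_mem_subalgebra_near_continuous_of_isCompact_of_separatesPoints
      hsep ⟨V, hVc⟩ hK (show 0 < ε / 4 by linarith)
  have hq' : ∀ x ∈ Λ ∪ Metric.closedBall (0 : EuclideanSpace ℝ (Fin n)) r,
      |q x - V x| < ε / 4 := hq
  have hqe : ∀ x, q x = MvPolynomial.eval (fun i => x i) Q := by
    intro x; rw [← heval, ← hQ]; rfl
  have hsup : ∀ H : EuclideanSpace ℝ (Fin n) → ℝ, (∀ x ∈ Λ, |V x - H x| ≤ ε / 2) →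
      (⨆ x ∈ Λ, |V x - H x|) < ε := by
    intro H h
    refine lt_of_le_of_lt (Real.iSup_le (fun x => Real.iSup_le (fun hx => h x hx) ?_) ?_)
      (half_lt_self hε) <;> linarith
  refine ⟨fun x => q x - ε / 4, fun x => q x + ε / 4, ⟨Q - MvPolynomial.C (ε / 4), ?_⟩,
    ⟨Q + MvPolynomial.C (ε / 4), ?_⟩, hsup _ ?_, hsup _ ?_, ?_, ?_⟩
  · intro x; simp [hqe]
  · intro x; simp [hqe]
  · intro x hx
    have := abs_lt.1 (hq' x (Or.inl hx))
    exact abs_le.2 ⟨by linarith, by linarith⟩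
  · intro x hx
    have := abs_lt.1 (hq' x (Or.inl hx))
    exact abs_le.2 ⟨by linarith, by linarith⟩
  · intro x hx i
    have h1 := abs_lt.1 (hq' x (Or.inr (by simpa using hx.le)))
    have h2 : V x ≤ g i x := by
      rw [hV]; exact Finset.inf'_le _ (Finset.mem_univ i)
    show q x - ε / 4 < g i x
    linarith
  · intro i x _ hx
    have h1 := abs_lt.1 (hq' x (Or.inl hx.1))
    have h2 : g i x ≤ V x := by
      rw [hV]; exact Finset.le_inf' _ _ (fun j _ => hx.2 j)
    show g i x < q x + ε / 4
    linarith
end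

section
/- Let n, m ≥ 1, let Λ ⊂ ℝⁿ be a compact set, let r > 0, let g₁, …, g_m : ℝⁿ → ℝ be polynomial functions, and set V(x) := max_{1 ≤ i ≤ m} g_i(x). Then for every ε > 0 there exist polynomial functions H₁, H₂ : ℝⁿ → ℝ such that: sup_{x∈Λ} |V(x) − H_j(x)| < ε for j ∈ {1,2}; H₁(x) > g_i(x) for every x with ‖x‖₂ < r and every 1 ≤ i ≤ m; and H₂(x) < g_i(x) for every 1 ≤ i ≤ m and every x with ‖x‖₂ < r satisfying x ∈ Ȳ_i, where Ȳ_i := {y ∈ Λ : g_i(y) ≥ g_j(y) for all 1 ≤ j ≤ m}. -/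
/-- Multivariate Weierstrass approximation on a compact set. -/
theorem exists_poly_near {n : ℕ} (K : Set (EuclideanSpace ℝ (Fin n))) (hK : IsCompact K)
    (f : EuclideanSpace ℝ (Fin n) → ℝ) (hf : Continuous f) (δ : ℝ) (hδ : 0 < δ) :
    ∃ P : MvPolynomial (Fin n) ℝ, ∀ x ∈ K, |MvPolynomial.eval (fun i => x i) P - f x| < δ := by
  haveI : CompactSpace K := isCompact_iff_compactSpace.mp hK
  let X : Fin n → C(K, ℝ) := fun i => ⟨fun x => x.1 i, by fun_prop⟩
  let φ : MvPolynomial (Fin n) ℝ →ₐ[ℝ] C(K, ℝ) := MvPolynomial.aeval X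
  have hφ : ∀ P (x : K), φ P x = MvPolynomial.eval (fun i => x.1 i) P := by
    intro P x
    induction P using MvPolynomial.induction_on with
    | C a => simp [φ]
    | add p q hp hq => simp [hp, hq]
    | mul_X p i hp => simp [hp]; left; simp [φ, X]
  have hsep : φ.range.SeparatesPoints := by
    intro x y hxy
    have : ∃ i, x.1 i ≠ y.1 i := by
      by_contra! h
      exact hxy (Subtype.ext (by ext i; exact h i))
    obtain ⟨i, hi⟩ := this
    refine ⟨_, ⟨φ (MvPolynomial.X i), ⟨_, rfl⟩, rfl⟩, ?_⟩
    simpa [hφ] using hi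
  obtain ⟨⟨q, P, rfl⟩, hq⟩ :=
    ContinuousMap.exists_mem_subalgebra_near_continuous_of_separatesPoints φ.range hsep
      (fun x : K => f x) (by fun_prop) δ hδ
  refine ⟨P, fun x hx => ?_⟩
  have := hq ⟨x, hx⟩
  rw [← hφ P ⟨x, hx⟩]
  simpa [Real.norm_eq_abs] using this

/-- The pointwise maximum `V` of finitely many polynomial functions can be
approximated uniformly on a compact set `Λ` by polynomial functions `H₁, H₂`, with
`H₁ > g i` on the open ball `B_r(0)` for every `i`, and `H₂ < g i` on
`B_r(0) ∩ Ȳ_i`, where `Ȳ_i = {y ∈ Λ | ∀ j, g i y ≥ g j y}`. -/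
theorem statement_8 (n m : ℕ) (hn : 1 ≤ n) (hm : 1 ≤ m)
    (Λ : Set (EuclideanSpace ℝ (Fin n))) (hΛ : IsCompact Λ)
    (r : ℝ) (hr : 0 < r)
    (g : Fin m → EuclideanSpace ℝ (Fin n) → ℝ)
    (hg : ∀ i, IsPolynomialFun (g i))
    (V : EuclideanSpace ℝ (Fin n) → ℝ)
    (hV : ∀ x, V x = Finset.univ.sup'
      (Finset.univ_nonempty_iff.mpr ⟨⟨0, hm⟩⟩) (fun i => g i x))
    (ε : ℝ) (hε : 0 < ε) :
    ∃ H₁ H₂ : EuclideanSpace ℝ (Fin n) → ℝ,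
      IsPolynomialFun H₁ ∧ IsPolynomialFun H₂ ∧
      (⨆ x ∈ Λ, |V x - H₁ x|) < ε ∧ (⨆ x ∈ Λ, |V x - H₂ x|) < ε ∧
      (∀ x, ‖x‖ < r → ∀ i : Fin m, g i x < H₁ x) ∧
      (∀ i : Fin m, ∀ x, ‖x‖ < r →
        x ∈ {y ∈ Λ | ∀ j : Fin m, g j y ≤ g i y} → H₂ x < g i x) := by
  have hgc : ∀ i, Continuous (g i) := by
    intro i
    obtain ⟨P, hP⟩ := hg i
    have : g i = fun x => MvPolynomial.eval (fun i => x i) P := funext hP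
    rw [this]
    exact (MvPolynomial.continuous_eval P).comp (by fun_prop)
  have hVc : Continuous V := by
    have : V = fun x => Finset.univ.sup'
      (Finset.univ_nonempty_iff.mpr ⟨⟨0, hm⟩⟩) (fun i => g i x) := funext hV
    rw [this]
    exact Continuous.finset_sup'_apply _ (fun i _ => hgc i)
  have hgV : ∀ x i, g i x ≤ V x := by
    intro x i
    rw [hV]
    exact Finset.le_sup' (fun i => g i x) (Finset.mem_univ i)
  obtain ⟨P, hP⟩ := exists_poly_near
    (Λ ∪ Metric.closedBall 0 r) (hΛ.union (isCompact_closedBall 0 r)) V hVc (ε / 4) (by positivity)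
  refine ⟨fun x => MvPolynomial.eval (fun i => x i) (P + MvPolynomial.C (ε / 4)),
    fun x => MvPolynomial.eval (fun i => x i) (P - MvPolynomial.C (ε / 4)),
    ⟨_, fun _ => rfl⟩, ⟨_, fun _ => rfl⟩, ?_, ?_, ?_, ?_⟩
  · refine lt_of_le_of_lt (Real.iSup_le (a := ε / 2) (fun x => Real.iSup_le (fun hx => ?_)
      (by positivity)) (by positivity)) (by linarith)
    have h := abs_lt.mp (hP x (Or.inl hx))
    simp only [map_add, MvPolynomial.eval_C]
    rw [abs_le]
    constructor <;> linarith [h.1, h.2]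
  · refine lt_of_le_of_lt (Real.iSup_le (a := ε / 2) (fun x => Real.iSup_le (fun hx => ?_)
      (by positivity)) (by positivity)) (by linarith)
    have h := abs_lt.mp (hP x (Or.inl hx))
    simp only [map_sub, MvPolynomial.eval_C]
    rw [abs_le]
    constructor <;> linarith [h.1, h.2]
  · intro x hx i
    have h := abs_lt.mp (hP x (Or.inr (by simpa using hx.le)))
    simp only [map_add, MvPolynomial.eval_C]
    linarith [h.1, h.2, hgV x i]
  · rintro i x - ⟨hx, hi⟩
    have h := abs_lt.mp (hP x (Or.inl hx))
    have hVi : V x ≤ g i x := by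
      rw [hV]
      exact Finset.sup'_le _ _ (fun j _ => hi j)
    simp only [map_sub, MvPolynomial.eval_C]
    linarith [h.1, h.2]
end

section
/- Let n ≥ 1, let Λ ⊂ ℝⁿ be a compact set, let N ≥ 1, and let x₁, …, x_N ∈ Λ be finitely many points. Define V : ℝⁿ → ℝ by V(x) = 1 − 𝟙_{{x₁,…,x_N}}(x) (so V(x) = 0 if x ∈ {x₁,…,x_N} and V(x) = 1 otherwise). Then for every ε > 0 there exists a polynomial function H : ℝⁿ → ℝ such that ∫_Λ |H(x) − V(x)| dx < ε (integral with respect to Lebesgue measure), H(x_i) < 0 for every 1 ≤ i ≤ N, and H(x) < 1 for every x ∈ Λ. -/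
open MeasureTheory

/-- For finitely many points `x₁, …, x_N` in a compact set `Λ ⊂ ℝⁿ` and
`V = 1 - 𝟙_{{x₁,…,x_N}}`, for every `ε > 0` there is a polynomial function `H` with
`∫_Λ |H - V| < ε`, `H (x i) < 0` for all `i`, and `H < 1` on `Λ`. -/
theorem statement_11 (n N : ℕ) (hn : 1 ≤ n) (hN : 1 ≤ N)
    (Λ : Set (EuclideanSpace ℝ (Fin n))) (hΛ : IsCompact Λ)
    (p : Fin N → EuclideanSpace ℝ (Fin n)) (hp : ∀ i, p i ∈ Λ)
    (V : EuclideanSpace ℝ (Fin n) → ℝ)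
    (hV : ∀ x, V x = 1 - Set.indicator (Set.range p) (fun _ => (1 : ℝ)) x)
    (ε : ℝ) (hε : 0 < ε) :
    ∃ H : EuclideanSpace ℝ (Fin n) → ℝ, IsPolynomialFun H ∧
      (∫ x in Λ, |H x - V x|) < ε ∧
      (∀ i : Fin N, H (p i) < 0) ∧
      (∀ x ∈ Λ, H x < 1) := by
  classical
  haveI : Nonempty (Fin n) := ⟨⟨0, hn⟩⟩
  haveI : Nontrivial (EuclideanSpace ℝ (Fin n)) := inferInstance
  let Q : MvPolynomial (Fin n) ℝ :=
    ∏ j : Fin N, ∑ i : Fin n, (MvPolynomial.X i - MvPolynomial.C (p j i)) ^ 2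
  let q : EuclideanSpace ℝ (Fin n) → ℝ := fun x => ∏ j : Fin N, ∑ i : Fin n, (x i - p j i) ^ 2
  have hQ : ∀ x : EuclideanSpace ℝ (Fin n), MvPolynomial.eval (fun i => x i) Q = q x := by
    intro x
    simp [Q, q]
  have hqc : Continuous q := by
    simp only [q]
    fun_prop
  have hq0 : ∀ x, 0 ≤ q x := fun x =>
    Finset.prod_nonneg fun j _ => Finset.sum_nonneg fun i _ => sq_nonneg _
  have hqp : ∀ j, q (p j) = 0 := fun j => by
    refine Finset.prod_eq_zero (Finset.mem_univ j) ?_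
    simp
  have hqpos : ∀ x, x ∉ Set.range p → 0 < q x := by
    intro x hx
    refine lt_of_le_of_ne (hq0 x) (fun h => hx ?_)
    obtain ⟨j, -, hj⟩ := Finset.prod_eq_zero_iff.1 h.symm
    refine ⟨j, ?_⟩
    rw [Finset.sum_eq_zero_iff_of_nonneg (fun i _ => sq_nonneg _)] at hj
    ext i
    have h2 := hj i (Finset.mem_univ i)
    have h3 := pow_eq_zero_iff (two_ne_zero) |>.1 h2
    linarith
  obtain ⟨M, hM, hqM⟩ : ∃ M : ℝ, 0 < M ∧ ∀ x ∈ Λ, q x ≤ M := by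
    obtain ⟨M, hM⟩ := hΛ.bddAbove_image hqc.continuousOn
    refine ⟨max M 1, by positivity, fun x hx => le_trans (hM ⟨x, hx, rfl⟩) (le_max_left _ _)⟩
  let u : EuclideanSpace ℝ (Fin n) → ℝ := fun x => 1 - (2 * M)⁻¹ * q x
  have huc : Continuous u := by
    simp only [u]
    fun_prop
  have hu1 : ∀ x, u x ≤ 1 := fun x => by
    have : 0 ≤ (2 * M)⁻¹ * q x := mul_nonneg (by positivity) (hq0 x)
    simp only [u]; linarith
  have hu0 : ∀ x ∈ Λ, 0 < u x := fun x hx => by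
    have h1 : (2 * M)⁻¹ * q x ≤ (2 * M)⁻¹ * M :=
      mul_le_mul_of_nonneg_left (hqM x hx) (by positivity)
    have h2 : (2 * M)⁻¹ * M = 1 / 2 := by field_simp
    simp only [u]; linarith
  have hult : ∀ x, x ∉ Set.range p → u x < 1 := fun x hx => by
    have : 0 < (2 * M)⁻¹ * q x := mul_pos (by positivity) (hqpos x hx)
    simp only [u]; linarith
  have hnull : ∀ᵐ x ∂(volume.restrict Λ), x ∉ Set.range p :=
    ae_restrict_of_ae ((Set.finite_range p).countable.ae_notMem volume)
  have hmem : ∀ᵐ x ∂(volume.restrict Λ), x ∈ Λ := ae_restrict_mem hΛ.measurableSet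
  haveI : IsFiniteMeasure (volume.restrict Λ) := ⟨by simpa using hΛ.measure_lt_top⟩
  have hlim : Filter.Tendsto (fun k : ℕ => ∫ x in Λ, 2 * u x ^ k) Filter.atTop
      (nhds (∫ x in Λ, (0 : ℝ))) := by
    refine tendsto_integral_of_dominated_convergence (fun _ => (2 : ℝ)) ?_ ?_ ?_ ?_
    · intro k
      exact (continuous_const.mul (huc.pow k)).aestronglyMeasurable
    · exact integrable_const _
    · intro k
      filter_upwards [hmem] with x hx
      have h0 : 0 ≤ u x ^ k := pow_nonneg (hu0 x hx).le k
      have h1 : u x ^ k ≤ 1 := pow_le_one₀ (hu0 x hx).le (hu1 x)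
      rw [Real.norm_eq_abs, abs_of_nonneg (by positivity)]
      linarith
    · filter_upwards [hmem, hnull] with x hx hx'
      simpa using (tendsto_pow_atTop_nhds_zero_of_lt_one (hu0 x hx).le (hult x hx')).const_mul 2
  rw [integral_zero] at hlim
  obtain ⟨k, hk⟩ := (hlim.eventually (gt_mem_nhds hε)).exists
  refine ⟨fun x => 1 - 2 * u x ^ k, ?_, ?_, ?_, ?_⟩
  · refine ⟨1 - MvPolynomial.C 2 * (1 - MvPolynomial.C (2 * M)⁻¹ * Q) ^ k, fun x => ?_⟩
    simp only [map_sub, map_mul, map_pow, map_one, MvPolynomial.eval_C, hQ, u]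
  · refine lt_of_eq_of_lt (integral_congr_ae ?_) hk
    filter_upwards [hmem, hnull] with x hx hx'
    have h0 : 0 ≤ u x ^ k := pow_nonneg (hu0 x hx).le k
    rw [hV, Set.indicator_of_notMem hx', show 1 - 2 * u x ^ k - (1 - 0) = -(2 * u x ^ k) by ring,
      abs_neg, abs_of_nonneg (by positivity)]
  · intro i
    simp only [u, hqp, mul_zero, sub_zero, one_pow]
    norm_num
  · intro x hx
    have h0 : 0 < u x ^ k := pow_pos (hu0 x hx) k
    simp only
    linarith
end

section
/- Let Λ = [−10, 10] ⊂ ℝ, let V : ℝ → ℝ be V(x) = 1 − 𝟙_{[1,2]}(x), and for each integer d ≥ 1 let J_d(x) = 1 − 𝟙_{[1,2]}(x) − 1/d. Then: (i) J_d(x) ≤ V(x) for all x ∈ Λ and all d ≥ 1; (ii) sup_{x∈Λ} |V(x) − J_d(x)| = 1/d, which tends to 0 as d → ∞; (iii) {x ∈ Λ : V(x) < 1} = [1,2] and {x ∈ Λ : J_d(x) < 1} = [−10,10] for every d ≥ 1; and (iv) the Hausdorff distance D_H({x ∈ Λ : J_d(x) < 1}, {x ∈ Λ : V(x) < 1}) =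 11 for every d ≥ 1, so it does not tend to 0. (This shows the hypothesis of approximation from above in the Hausdorff sublevel-set convergence theorem cannot be replaced by approximation from below.) -/
open Filter

/-- **Counterexample: approximation from below fails for Hausdorff
convergence.** On `Λ = [-10,10]`, with `V = 1 - 𝟙_{[1,2]}` and
`J_d = 1 - 𝟙_{[1,2]} - 1/d`: `J_d ≤ V` on `Λ`, `sup_{x∈Λ} |V - J_d| = 1/d → 0`, yet the
strict `1`-sublevel sets are `[1,2]` and `[-10,10]`, whose Hausdorff distance is `11` for
every `d ≥ 1`, so it does not tend to `0`. -/
theorem statement_13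
    (Λ : Set ℝ) (hΛ : Λ = Set.Icc (-10) 10)
    (V : ℝ → ℝ)
    (hV : ∀ x, V x = 1 - Set.indicator (Set.Icc 1 2) (fun _ => (1 : ℝ)) x)
    (J : ℕ → ℝ → ℝ)
    (hJ : ∀ (d : ℕ) (x : ℝ),
      J d x = 1 - Set.indicator (Set.Icc 1 2) (fun _ => (1 : ℝ)) x - 1 / (d : ℝ)) :
    (∀ d : ℕ, 1 ≤ d → ∀ x ∈ Λ, J d x ≤ V x) ∧
    (∀ d : ℕ, 1 ≤ d → (⨆ x ∈ Λ, |V x - J d x|) = 1 / (d : ℝ)) ∧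
    Tendsto (fun d : ℕ => 1 / (d : ℝ)) atTop (nhds 0) ∧
    ({x ∈ Λ | V x < 1} = Set.Icc 1 2) ∧
    (∀ d : ℕ, 1 ≤ d → {x ∈ Λ | J d x < 1} = Set.Icc (-10) 10) ∧
    (∀ d : ℕ, 1 ≤ d →
      Metric.hausdorffDist {x ∈ Λ | J d x < 1} {x ∈ Λ | V x < 1} = 11) ∧
    ¬ Tendsto (fun d : ℕ =>
        Metric.hausdorffDist {x ∈ Λ | J d x < 1} {x ∈ Λ | V x < 1}) atTop (nhds 0) := by
  have hpos : ∀ d : ℕ, 1 ≤ d → (0 : ℝ) < 1 / (d : ℝ) := by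
    intro d hd
    have : (0 : ℝ) < d := by exact_mod_cast hd
    positivity
  have hdiff : ∀ (d : ℕ) (x : ℝ), V x - J d x = 1 / (d : ℝ) := by
    intro d x
    rw [hV, hJ]; ring
  have hVs : {x ∈ Λ | V x < 1} = Set.Icc 1 2 := by
    ext x
    simp only [Set.mem_setOf_eq, hΛ, hV]
    by_cases hx : x ∈ Set.Icc (1 : ℝ) 2
    · rw [Set.indicator_of_mem hx]
      refine ⟨fun _ => hx, fun _ => ⟨⟨by linarith [hx.1], by linarith [hx.2]⟩, by norm_num⟩⟩
    · rw [Set.indicator_of_notMem hx]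
      refine ⟨fun h => ?_, fun h => absurd h hx⟩
      have := h.2
      norm_num at this
  have hJs : ∀ d : ℕ, 1 ≤ d → {x ∈ Λ | J d x < 1} = Set.Icc (-10) 10 := by
    intro d hd
    ext x
    simp only [Set.mem_setOf_eq, hΛ, hJ]
    refine ⟨fun h => h.1, fun h => ⟨h, ?_⟩⟩
    have h1 := hpos d hd
    have h2 : 0 ≤ Set.indicator (Set.Icc 1 2) (fun _ => (1 : ℝ)) x :=
      Set.indicator_nonneg (fun _ _ => zero_le_one) x
    linarith
  have hH : ∀ d : ℕ, 1 ≤ d →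
      Metric.hausdorffDist {x ∈ Λ | J d x < 1} {x ∈ Λ | V x < 1} = 11 := by
    intro d hd
    rw [hJs d hd, hVs]
    apply le_antisymm
    · apply Metric.hausdorffDist_le_of_mem_dist (by norm_num)
      · intro x hx
        refine ⟨1, ⟨le_refl _, by norm_num⟩, ?_⟩
        rw [Real.dist_eq, abs_le]
        constructor <;> linarith [hx.1, hx.2]
      · intro x hx
        refine ⟨x, ⟨by linarith [hx.1], by linarith [hx.2]⟩, ?_⟩
        simp
    · have hne : (Set.Icc (1 : ℝ) 2).Nonempty := ⟨1, le_refl _, by norm_num⟩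
      have hne' : (Set.Icc (-10 : ℝ) 10).Nonempty := ⟨1, by norm_num, by norm_num⟩
      have hmem : (-10 : ℝ) ∈ Set.Icc (-10 : ℝ) 10 := ⟨le_refl _, by norm_num⟩
      refine le_trans ?_ (Metric.infDist_le_hausdorffDist_of_mem hmem
        (Metric.hausdorffEDist_ne_top_of_nonempty_of_bounded hne' hne
          (Metric.isBounded_Icc _ _) (Metric.isBounded_Icc _ _)))
      rw [Metric.le_infDist hne]
      intro y hy
      rw [Real.dist_eq, le_abs]
      right
      linarith [hy.1]
  refine ⟨?_, ?_, tendsto_one_div_atTop_nhds_zero_nat, hVs, hJs, hH, ?_⟩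
  · intro d hd x _
    linarith [hdiff d x, hpos d hd]
  · intro d hd
    have h0 := hpos d hd
    simp only [hdiff, abs_of_pos h0]
    have hle : ∀ x : ℝ, (⨆ _ : x ∈ Λ, 1 / (d : ℝ)) ≤ 1 / (d : ℝ) :=
      fun x => Real.iSup_le (fun _ => le_refl _) h0.le
    apply le_antisymm
    · exact Real.iSup_le hle h0.le
    · have hmem : (0 : ℝ) ∈ Λ := by rw [hΛ]; constructor <;> norm_num
      have h1 : (⨆ _ : (0 : ℝ) ∈ Λ, 1 / (d : ℝ)) = 1 / (d : ℝ) := ciSup_pos hmem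
      calc 1 / (d : ℝ) = ⨆ _ : (0 : ℝ) ∈ Λ, 1 / (d : ℝ) := h1.symm
        _ ≤ _ := le_ciSup (f := fun x : ℝ => ⨆ _ : x ∈ Λ, 1 / (d : ℝ))
          ⟨1 / (d : ℝ), by rintro _ ⟨x, rfl⟩; exact hle x⟩ 0
  · intro h
    have h11 : Tendsto (fun d : ℕ =>
        Metric.hausdorffDist {x ∈ Λ | J d x < 1} {x ∈ Λ | V x < 1}) atTop (nhds 11) := by
      apply tendsto_const_nhds.congr'
      filter_upwards [eventually_ge_atTop 1] with d hd
      exact (hH d hd).symm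
    have := tendsto_nhds_unique h h11
    norm_num at this
end

section
/- Let Λ = [−10, 10] ⊂ ℝ, let V : ℝ → ℝ be V(x) = 1 − 𝟙_{{1/2}}(x) − 𝟙_{[1,2]}(x), and for each integer d ≥ 2 let J_d(x) = 1 − 𝟙_{[1, 2−1/d]}(x). Then: (i) V(x) ≤ J_d(x) for all x ∈ Λ and all d ≥ 2; (ii) ∫_Λ |V(x) − J_d(x)| dx = 1/d, which tends to 0 as d → ∞; (iii) {x ∈ Λ : V(x) < 1} = {1/2} ∪ [1,2] and {x ∈ Λ : J_d(x) < 1} = [1, 2−1/d]; and (iv) the Hausdorff distance D_H({x ∈ Λ : V(x) < 1}, {x ∈ Λ : J_d(x) < 1}) = 1/2 for every d ≥ 2, so it does not tend to 0. (This shows that L¹ convergence from above does not suffice for Hausdorff convergence of strict sublevel sets.) -/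
open Filter MeasureTheory

/-- **Counterexample: `L¹` convergence from above does not give Hausdorff
convergence.** On `Λ = [-10,10]`, with `V = 1 - 𝟙_{{1/2}} - 𝟙_{[1,2]}` and
`J_d = 1 - 𝟙_{[1,2-1/d]}`: `V ≤ J_d` on `Λ`, `∫_Λ |V - J_d| = 1/d → 0`, the strict
`1`-sublevel sets are `{1/2} ∪ [1,2]` and `[1, 2-1/d]`, and their Hausdorff distance is
`1/2` for every `d ≥ 2`, so it does not tend to `0`. -/
theorem statement_14
    (Λ : Set ℝ) (hΛ : Λ = Set.Icc (-10) 10)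
    (V : ℝ → ℝ)
    (hV : ∀ x, V x = 1 - Set.indicator {(1/2 : ℝ)} (fun _ => (1 : ℝ)) x
      - Set.indicator (Set.Icc 1 2) (fun _ => (1 : ℝ)) x)
    (J : ℕ → ℝ → ℝ)
    (hJ : ∀ (d : ℕ) (x : ℝ),
      J d x = 1 - Set.indicator (Set.Icc 1 (2 - 1 / (d : ℝ))) (fun _ => (1 : ℝ)) x) :
    (∀ d : ℕ, 2 ≤ d → ∀ x ∈ Λ, V x ≤ J d x) ∧
    (∀ d : ℕ, 2 ≤ d → (∫ x in Λ, |V x - J d x|) = 1 / (d : ℝ)) ∧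
    Tendsto (fun d : ℕ => 1 / (d : ℝ)) atTop (nhds 0) ∧
    ({x ∈ Λ | V x < 1} = {(1/2 : ℝ)} ∪ Set.Icc 1 2) ∧
    (∀ d : ℕ, 2 ≤ d → {x ∈ Λ | J d x < 1} = Set.Icc 1 (2 - 1 / (d : ℝ))) ∧
    (∀ d : ℕ, 2 ≤ d →
      Metric.hausdorffDist {x ∈ Λ | V x < 1} {x ∈ Λ | J d x < 1} = 1 / 2) ∧
    ¬ Tendsto (fun d : ℕ =>
        Metric.hausdorffDist {x ∈ Λ | V x < 1} {x ∈ Λ | J d x < 1}) atTop (nhds 0) := by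
  have hd : ∀ d : ℕ, 2 ≤ d → 0 < 1 / (d : ℝ) ∧ 1 / (d : ℝ) ≤ 1 / 2 := by
    intro d h
    have h2 : (2 : ℝ) ≤ d := by exact_mod_cast h
    exact ⟨by positivity, one_div_le_one_div_of_le (by norm_num) h2⟩
  have hS : {x ∈ Λ | V x < 1} = {(1/2 : ℝ)} ∪ Set.Icc 1 2 := by
    ext x
    simp only [hΛ, hV, Set.indicator_apply, Set.mem_ofPred_eq, Set.mem_union,
      Set.mem_singleton_iff, Set.mem_Icc]
    constructor
    · rintro ⟨_, h⟩
      by_contra hc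
      push Not at hc
      rw [if_neg hc.1, if_neg (fun h => absurd h.2 (not_le.2 (hc.2 h.1)))] at h
      norm_num at h
    · rintro (h | h)
      · subst h; norm_num
      · refine ⟨⟨by linarith, by linarith⟩, ?_⟩
        rw [if_pos h]
        split_ifs <;> norm_num
  have hT : ∀ d : ℕ, 2 ≤ d → {x ∈ Λ | J d x < 1} = Set.Icc 1 (2 - 1 / (d : ℝ)) := by
    intro d h
    obtain ⟨h0, h1⟩ := hd d h
    ext x
    simp only [hΛ, hJ, Set.indicator_apply, Set.mem_ofPred_eq]
    by_cases hx : x ∈ Set.Icc 1 (2 - 1 / (d : ℝ))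
    · rw [if_pos hx]
      simp only [hx, iff_true]
      exact ⟨⟨by linarith [hx.1], by linarith [hx.2]⟩, by norm_num⟩
    · rw [if_neg hx]
      simp only [hx, iff_false]
      rintro ⟨_, h⟩
      norm_num at h
  have hH : ∀ d : ℕ, 2 ≤ d →
      Metric.hausdorffDist {x ∈ Λ | V x < 1} {x ∈ Λ | J d x < 1} = 1 / 2 := by
    intro d h
    obtain ⟨h0, h1⟩ := hd d h
    rw [hS, hT d h]
    have ne : (Set.Icc (1 : ℝ) (2 - 1 / (d : ℝ))).Nonempty := ⟨1, le_refl _, by linarith⟩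
    apply le_antisymm
    · apply Metric.hausdorffDist_le_of_mem_dist (by norm_num)
      · rintro x (hx | hx)
        · rw [Set.mem_singleton_iff] at hx
          subst hx
          exact ⟨1, ⟨le_refl _, by linarith⟩, by rw [Real.dist_eq]; norm_num [abs_le]⟩
        · by_cases hx2 : x ≤ 2 - 1 / (d : ℝ)
          · exact ⟨x, ⟨hx.1, hx2⟩, by simp⟩
          · refine ⟨2 - 1 / (d : ℝ), ⟨by linarith, le_refl _⟩, ?_⟩
            rw [Real.dist_eq, abs_le]
            constructor <;> linarith [hx.2]
      · intro x hx
        exact ⟨x, Or.inr ⟨hx.1, by linarith [hx.2]⟩, by simp⟩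
    · by_contra hc
      push Not at hc
      have fin := Metric.hausdorffEDist_ne_top_of_nonempty_of_bounded
        (s := {(1/2 : ℝ)} ∪ Set.Icc 1 2) ⟨1/2, Or.inl rfl⟩ ne
        (Bornology.isBounded_singleton.union (Metric.isBounded_Icc 1 2))
        (Metric.isBounded_Icc _ _)
      obtain ⟨y, hy, hlt⟩ := Metric.exists_dist_lt_of_hausdorffDist_lt
        (x := (1/2 : ℝ)) (Or.inl rfl) hc fin
      rw [Real.dist_eq, abs_lt] at hlt
      linarith [hlt.1, hy.1]
  refine ⟨?_, ?_, tendsto_one_div_atTop_nhds_zero_nat, hS, hT, hH, ?_⟩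
  · intro d h x _
    obtain ⟨h0, h1⟩ := hd d h
    rw [hV, hJ]
    have e1 : Set.indicator (Set.Icc 1 (2 - 1 / (d : ℝ))) (fun _ => (1 : ℝ)) x
        ≤ Set.indicator (Set.Icc 1 2) (fun _ => (1 : ℝ)) x :=
      Set.indicator_le_indicator_of_subset (Set.Icc_subset_Icc_right (by linarith))
        (fun _ => zero_le_one) x
    have e2 : 0 ≤ Set.indicator {(1/2 : ℝ)} (fun _ => (1 : ℝ)) x :=
      Set.indicator_nonneg (fun _ _ => zero_le_one) x
    linarith
  · intro d h
    obtain ⟨h0, h1⟩ := hd d h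
    have hae : ∀ᵐ x ∂(volume.restrict Λ), |V x - J d x|
        = Set.indicator (Set.Ioc (2 - 1 / (d : ℝ)) 2) (fun _ => (1 : ℝ)) x := by
      apply ae_restrict_of_ae
      have : ∀ᵐ x : ℝ, x ≠ 1/2 := Measure.ae_ne volume (1/2 : ℝ)
      filter_upwards [this] with x hx
      rw [hV, hJ]
      simp only [Set.indicator_apply, Set.mem_singleton_iff, Set.mem_Icc, Set.mem_Ioc, if_neg hx]
      split_ifs with a b c c b c c <;> first | (norm_num; done) | (exfalso; grind)
    rw [integral_congr_ae hae, setIntegral_indicator measurableSet_Ioc]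
    have : Λ ∩ Set.Ioc (2 - 1 / (d : ℝ)) 2 = Set.Ioc (2 - 1 / (d : ℝ)) 2 := by
      rw [hΛ]
      apply Set.inter_eq_right.2
      intro x hx
      exact ⟨by linarith [hx.1], by linarith [hx.2]⟩
    rw [this]
    simp [Measure.real]
  · intro ht
    have h2 : Tendsto (fun d : ℕ =>
        Metric.hausdorffDist {x ∈ Λ | V x < 1} {x ∈ Λ | J d x < 1}) atTop (nhds (1/2)) := by
      apply tendsto_const_nhds.congr'
      filter_upwards [eventually_ge_atTop 2] with d h
      exact (hH d h).symm
    have := tendsto_nhds_unique ht h2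
    norm_num at this
end

section
/- Let Λ = [0, ∞) ⊂ ℝ (a closed but non-compact set), let V(x) = −e^{−x}, and for each integer d ≥ 1 let J_d(x) = 1/d − e^{−x}. Then: (i) V(x) ≤ J_d(x) for all x ∈ Λ and all d ≥ 1; (ii) sup_{x∈Λ} |V(x) − J_d(x)| = 1/d, which tends to 0 as d → ∞; (iii) {x ∈ Λ : V(x) < 0} = [0, ∞) and {x ∈ Λ : J_d(x) < 0} = [0, ln d); and (iv) the extended Hausdorff distance (EMetric.hausdorffEdist) between {x ∈ Λ : J_d(x) < 0} and {x ∈ Λ : V(x) < 0} equals ∞ for every d ≥ 1, so it does not tend to 0. (This shows that compactness of Λ cannot be dropped from the Hausdorff sublevel-set convergence theorem.) -/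
open Filter

/-- **Counterexample: compactness of `Λ` cannot be dropped.**
On the non-compact set `Λ = [0,∞)`, with `V x = -e^{-x}` and `J_d x = 1/d - e^{-x}`:
`V ≤ J_d` on `Λ`, `sup_{x∈Λ} |V - J_d| = 1/d → 0`, the strict `0`-sublevel sets are
`[0,∞)` and `[0, ln d)`, and their extended Hausdorff distance is `∞` for every `d ≥ 1`,
so it does not tend to `0`. -/
theorem statement_16
    (Λ : Set ℝ) (hΛ : Λ = Set.Ici 0)
    (V : ℝ → ℝ) (hV : ∀ x, V x = -Real.exp (-x))
    (J : ℕ → ℝ → ℝ)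
    (hJ : ∀ (d : ℕ) (x : ℝ), J d x = 1 / (d : ℝ) - Real.exp (-x)) :
    (∀ d : ℕ, 1 ≤ d → ∀ x ∈ Λ, V x ≤ J d x) ∧
    (∀ d : ℕ, 1 ≤ d → (⨆ x ∈ Λ, |V x - J d x|) = 1 / (d : ℝ)) ∧
    Tendsto (fun d : ℕ => 1 / (d : ℝ)) atTop (nhds 0) ∧
    ({x ∈ Λ | V x < 0} = Set.Ici 0) ∧
    (∀ d : ℕ, 1 ≤ d → {x ∈ Λ | J d x < 0} = Set.Ico 0 (Real.log d)) ∧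
    (∀ d : ℕ, 1 ≤ d →
      EMetric.hausdorffEdist {x ∈ Λ | J d x < 0} {x ∈ Λ | V x < 0} = ⊤) ∧
    ¬ Tendsto (fun d : ℕ =>
        EMetric.hausdorffEdist {x ∈ Λ | J d x < 0} {x ∈ Λ | V x < 0}) atTop (nhds 0) := by
  subst hΛ
  have hVs : {x ∈ Set.Ici (0:ℝ) | V x < 0} = Set.Ici 0 := by
    ext x
    simp [hV, Real.exp_pos]
  have hJs : ∀ d : ℕ, 1 ≤ d → {x ∈ Set.Ici (0:ℝ) | J d x < 0} = Set.Ico 0 (Real.log d) := by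
    intro d hd
    have hd' : (0:ℝ) < d := by exact_mod_cast hd
    ext x
    simp only [Set.mem_setOf_eq, Set.mem_Ici, Set.mem_Ico, hJ, sub_neg, one_div]
    rw [Real.exp_neg, inv_lt_inv₀ hd' (Real.exp_pos x), Real.lt_log_iff_exp_lt hd']
  have hH : ∀ d : ℕ, 1 ≤ d →
      EMetric.hausdorffEdist {x ∈ Set.Ici (0:ℝ) | J d x < 0} {x ∈ Set.Ici (0:ℝ) | V x < 0} = ⊤ := by
    intro d hd
    rw [hVs, hJs d hd]
    change Metric.hausdorffEDist _ _ = ⊤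
    by_contra hne
    have hlog : 0 ≤ Real.log d := Real.log_natCast_nonneg d
    have hlt : Metric.hausdorffEDist (Set.Ici (0:ℝ)) (Set.Ico 0 (Real.log d)) <
        ENNReal.ofReal ((Metric.hausdorffEDist (Set.Ico 0 (Real.log d)) (Set.Ici (0:ℝ))).toReal + 1) := by
      rw [Metric.hausdorffEDist_comm, ENNReal.lt_ofReal_iff_toReal_lt hne]
      linarith
    set r := (Metric.hausdorffEDist (Set.Ico 0 (Real.log d)) (Set.Ici (0:ℝ))).toReal with hr
    have hr0 : 0 ≤ r := ENNReal.toReal_nonneg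
    have hmem : Real.log d + (r + 1) ∈ Set.Ici (0:ℝ) := by
      simp only [Set.mem_Ici]; linarith
    obtain ⟨y, hy, hxy⟩ := Metric.exists_edist_lt_of_hausdorffEDist_lt hmem hlt
    rw [edist_dist, ENNReal.ofReal_lt_ofReal_iff (by linarith), Real.dist_eq] at hxy
    have := (abs_lt.1 hxy).2
    linarith [hy.2]
  refine ⟨?_, ?_, tendsto_one_div_atTop_nhds_zero_nat, hVs, hJs, hH, ?_⟩
  · intro d _ x _
    have : (0:ℝ) ≤ 1 / (d:ℝ) := by positivity
    rw [hV, hJ]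
    linarith
  · intro d _
    have h0 : (0:ℝ) ≤ 1 / (d:ℝ) := by positivity
    have he : ∀ x, |V x - J d x| = 1 / (d:ℝ) := by
      intro x
      rw [hV, hJ, show -Real.exp (-x) - (1 / (d:ℝ) - Real.exp (-x)) = -(1 / (d:ℝ)) by ring,
        abs_neg, abs_of_nonneg h0]
    simp only [he]
    have hle : ∀ x : ℝ, (⨆ (_ : x ∈ Set.Ici (0:ℝ)), 1 / (d:ℝ)) ≤ 1 / (d:ℝ) :=
      fun x => Real.iSup_le (fun _ => le_rfl) h0
    apply le_antisymm
    · exact ciSup_le hle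
    · refine le_ciSup_of_le ⟨1 / (d:ℝ), ?_⟩ (0:ℝ) ?_
      · rintro _ ⟨x, rfl⟩
        exact hle x
      · rw [ciSup_pos (Set.mem_Ici.2 le_rfl)]
  · intro ht
    have h1 := ht.eventually (gt_mem_nhds (show (0:ENNReal) < 1 by norm_num))
    obtain ⟨d, hd, hd1⟩ := (h1.and (eventually_ge_atTop 1)).exists
    rw [hH d hd1] at hd
    exact absurd hd (by simp)
end
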